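/- arXiv:1807.11826 — 3 statements merged into one kernel-verified Lean document; each statement's English description precedes it below -/
import Mathlib

section
/- Let V : ℝⁿ → ℝ be continuously differentiable, let L, L* : ℝⁿ × ℝⁿ → ℝ be continuous with L*(x, v) ≥ 0 for all x, v and L(x, v) = L*(x, −v) + ⟨∇V(x), v⟩ for all x, v ∈ ℝⁿ, and let b* : ℝⁿ → ℝⁿ be such that for all x, v one has L*(x, v) = 0 if and only if v = b*(x). Suppose T > 0 and φ : [0, T] → ℝⁿ is continuously differentiable with V(φ(T)) = V(φ(0)) + ∫₀ᵀ L(φ(t), φ'(t)) dt. Then φ'(t) = −b*(φ(t)) for every t ∈ [0, T]. -/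
open RealInnerProductSpace

/-!
Along a `C¹` path the pairing of `V'` with the velocity integrates to the increment of `V`, so the
`L`-action of the path exceeds that increment by exactly the `L*`-action of the reversed path.
Equality of action and increment therefore says that a continuous nonnegative function has integral
zero, hence vanishes identically, and the only zero of `L* (x, ·)` is `b* x`.
-/

section

open Set MeasureTheory intervalIntegral

variable {E F : Type*} [NormedAddCommGroup E] [NormedSpace ℝ E]
  [NormedAddCommGroup F] [NormedSpace ℝ F] {a b : ℝ} {φ φ' : ℝ → E}

theorem intervalIntegral_eq_zero_iff_eqOn_zero_of_nonneg {f : ℝ → ℝ} (hab : a < b)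
    (hf : ContinuousOn f (Icc a b)) (hf_nonneg : ∀ t ∈ Icc a b, 0 ≤ f t) :
    ∫ t in a..b, f t = 0 ↔ EqOn f 0 (Icc a b) := by
  constructor
  · intro h_integral t ht
    by_contra hne
    have h_pos : 0 < ∫ s in a..b, f s :=
      integral_pos hab hf (fun s hs => hf_nonneg s (Ioc_subset_Icc_self hs))
        ⟨t, ht, (hf_nonneg t ht).lt_of_ne' hne⟩
    exact h_pos.ne' h_integral
  · intro h
    rw [← uIcc_of_le hab.le] at h
    simpa using integral_congr h

theorem continuousOn_fderiv_comp_apply {V : E → F} (hV : ContDiff ℝ 1 V) {s : Set ℝ}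
    (hφ : ContinuousOn φ s) (hφ' : ContinuousOn φ' s) :
    ContinuousOn (fun t => fderiv ℝ V (φ t) (φ' t)) s :=
  ((hV.continuous_fderiv one_ne_zero).comp_continuousOn hφ).clm_apply hφ'

theorem integral_fderiv_comp_eq_sub [CompleteSpace F] {V : E → F} (hV : ContDiff ℝ 1 V)
    (hab : a ≤ b) (hφ : ∀ t ∈ Icc a b, HasDerivWithinAt φ (φ' t) (Icc a b) t)
    (hφ' : ContinuousOn φ' (Icc a b)) :
    ∫ t in a..b, fderiv ℝ V (φ t) (φ' t) = V (φ b) - V (φ a) := by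
  have hφ_cont : ContinuousOn φ (Icc a b) := HasDerivWithinAt.continuousOn hφ
  have h_deriv : ∀ t ∈ Ioo a b, HasDerivAt (V ∘ φ) (fderiv ℝ V (φ t) (φ' t)) t := fun t ht =>
    (hV.differentiable one_ne_zero (φ t)).hasFDerivAt.comp_hasDerivAt t
      ((hφ t (Ioo_subset_Icc_self ht)).hasDerivAt (Icc_mem_nhds ht.1 ht.2))
  exact integral_eq_sub_of_hasDerivAt_of_le hab (hV.continuous.comp_continuousOn hφ_cont) h_deriv
    ((continuousOn_fderiv_comp_apply hV hφ_cont hφ').intervalIntegrable_of_Icc hab)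

theorem integral_lagrangian_eq_sub_add_integral_adjoint {V : E → ℝ} (hV : ContDiff ℝ 1 V)
    {L Lstar : E → E → ℝ} (hrev : ∀ x w, L x w = Lstar x (-w) + fderiv ℝ V x w)
    (hab : a ≤ b) (hφ : ∀ t ∈ Icc a b, HasDerivWithinAt φ (φ' t) (Icc a b) t)
    (hφ' : ContinuousOn φ' (Icc a b))
    (hLstar : IntervalIntegrable (fun t => Lstar (φ t) (-φ' t)) volume a b) :
    ∫ t in a..b, L (φ t) (φ' t) =
      V (φ b) - V (φ a) + ∫ t in a..b, Lstar (φ t) (-φ' t) := by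
  have h_fderiv : IntervalIntegrable (fun t => fderiv ℝ V (φ t) (φ' t)) volume a b :=
    (continuousOn_fderiv_comp_apply hV (HasDerivWithinAt.continuousOn hφ)
      hφ').intervalIntegrable_of_Icc hab
  simp only [hrev]
  rw [integral_add hLstar h_fderiv, integral_fderiv_comp_eq_sub hV hab hφ hφ', add_comm]

theorem minimizer_follows_reversed_adjoint_relaxation_general
    {V : E → ℝ} (hV : ContDiff ℝ 1 V) {L Lstar : E → E → ℝ}
    (hLstar : Continuous fun p : E × E => Lstar p.1 p.2)
    (hLstar_nonneg : ∀ x w, 0 ≤ Lstar x w)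
    (hrev : ∀ x w, L x w = Lstar x (-w) + fderiv ℝ V x w)
    {bstar : E → E} (hbstar : ∀ x w, Lstar x w = 0 ↔ w = bstar x) (hab : a < b)
    (hφ : ∀ t ∈ Icc a b, HasDerivWithinAt φ (φ' t) (Icc a b) t)
    (hφ' : ContinuousOn φ' (Icc a b)) :
    V (φ b) = V (φ a) + ∫ t in a..b, L (φ t) (φ' t) ↔
      ∀ t ∈ Icc a b, φ' t = -bstar (φ t) := by
  have h_cont : ContinuousOn (fun t => Lstar (φ t) (-φ' t)) (Icc a b) :=
    hLstar.comp_continuousOn ((HasDerivWithinAt.continuousOn hφ).prodMk hφ'.neg)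
  have h_balance := integral_lagrangian_eq_sub_add_integral_adjoint hV hrev hab.le hφ hφ'
    (h_cont.intervalIntegrable_of_Icc hab.le)
  calc V (φ b) = V (φ a) + ∫ t in a..b, L (φ t) (φ' t)
    _ ↔ ∫ t in a..b, Lstar (φ t) (-φ' t) = 0 := by constructor <;> intro h <;> linarith
    _ ↔ ∀ t ∈ Icc a b, Lstar (φ t) (-φ' t) = 0 :=
      intervalIntegral_eq_zero_iff_eqOn_zero_of_nonneg hab h_cont fun _ _ => hLstar_nonneg _ _
    _ ↔ ∀ t ∈ Icc a b, φ' t = -bstar (φ t) := by simp only [hbstar, neg_eq_iff_eq_neg]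

end

/-- With `L* ≥ 0`, `L (x, v) = L* (x, -v) + ⟪∇V x, v⟫`, and `b*` the unique
zero of `L* (x, ·)`, any C¹ path realizing the quasi-potential difference follows the
time-reversed adjoint relaxation dynamics: `φ' t = -b* (φ t)` on `[0, T]`. -/
theorem minimizer_follows_reversed_adjoint_relaxation
    {n : ℕ} (V : EuclideanSpace ℝ (Fin n) → ℝ) (hV : ContDiff ℝ 1 V)
    (L Lstar : EuclideanSpace ℝ (Fin n) → EuclideanSpace ℝ (Fin n) → ℝ)
    (hL : Continuous fun p : EuclideanSpace ℝ (Fin n) × EuclideanSpace ℝ (Fin n) => L p.1 p.2)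
    (hLstar : Continuous fun p : EuclideanSpace ℝ (Fin n) × EuclideanSpace ℝ (Fin n) =>
      Lstar p.1 p.2)
    (hLstar_nonneg : ∀ x w : EuclideanSpace ℝ (Fin n), 0 ≤ Lstar x w)
    (hrev : ∀ x w : EuclideanSpace ℝ (Fin n), L x w = Lstar x (-w) + ⟪gradient V x, w⟫)
    (bstar : EuclideanSpace ℝ (Fin n) → EuclideanSpace ℝ (Fin n))
    (hbstar : ∀ x w : EuclideanSpace ℝ (Fin n), Lstar x w = 0 ↔ w = bstar x)
    (T : ℝ) (hT : 0 < T)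
    (φ φ' : ℝ → EuclideanSpace ℝ (Fin n))
    (hφ : ∀ t ∈ Set.Icc (0 : ℝ) T, HasDerivAt φ (φ' t) t)
    (hφ' : ContinuousOn φ' (Set.Icc (0 : ℝ) T))
    (hmin : V (φ T) = V (φ 0) + ∫ t in (0 : ℝ)..T, L (φ t) (φ' t)) :
    ∀ t ∈ Set.Icc (0 : ℝ) T, φ' t = -bstar (φ t) := by
  simp only [inner_gradient_left] at hrev
  exact (minimizer_follows_reversed_adjoint_relaxation_general hV hLstar hLstar_nonneg hrev hbstar
    hT (fun t ht => (hφ t ht).hasDerivWithinAt) hφ').1 hmin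
end

section
/- Let V : ℝⁿ → ℝ be continuously differentiable, let L : ℝⁿ × ℝⁿ → ℝ be continuous with L(x, v) ≥ 0 for all x, v, satisfying the detailed-balance relation L(x, v) = L(x, −v) + ⟨∇V(x), v⟩ for all x, v ∈ ℝⁿ, and let b : ℝⁿ → ℝⁿ be such that for all x, v one has L(x, v) = 0 if and only if v = b(x). Suppose T > 0 and φ : [0, T] → ℝⁿ is continuously differentiable with V(φ(T)) = V(φ(0)) + ∫₀ᵀ L(φ(t), φ'(t)) dt. Then φ'(t) = −b(φ(t)) for every t ∈ [0, T]. -/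
open RealInnerProductSpace

/-! By detailed balance and the chain rule, the actions of a path and of its time reversal differ by
the increment of `V` along the path. When the action equals that increment, the reversed path has
zero action, so its Lagrangian, being continuous and nonnegative, vanishes at every time; that is,
the reversed path follows the drift. -/

theorem eqOn_zero_of_intervalIntegral_eq_zero {f : ℝ → ℝ} {t₀ t₁ : ℝ} (hlt : t₀ < t₁)
    (hf : ContinuousOn f (Set.Icc t₀ t₁)) (hf_nonneg : ∀ t ∈ Set.Icc t₀ t₁, 0 ≤ f t)
    (hint : ∫ t in t₀..t₁, f t = 0) : Set.EqOn f 0 (Set.Icc t₀ t₁) := by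
  intro t ht
  by_contra hne
  have hpos : 0 < ∫ s in t₀..t₁, f s :=
    intervalIntegral.integral_pos hlt hf (fun s hs => hf_nonneg s (Set.Ioc_subset_Icc_self hs))
      ⟨t, ht, (hf_nonneg t ht).lt_of_ne' hne⟩
  exact hpos.ne' hint

section Lagrangian

variable {E : Type*}

/-- The action `∫ L(φ, φ') dt` of a path `φ` on `[t₀, t₁]`. The velocity `φ'` is a separate
argument, so that `lagrangianAction L φ (-φ') t₀ t₁` is the action of the time-reversed path
`t ↦ φ (t₀ + t₁ - t)`. -/
noncomputable def lagrangianAction (L : E → E → ℝ) (φ φ' : ℝ → E) (t₀ t₁ : ℝ) : ℝ :=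
  ∫ t in t₀..t₁, L (φ t) (φ' t)

variable {L : E → E → ℝ} {φ φ' : ℝ → E} {t₀ t₁ : ℝ}

theorem eqOn_zero_of_lagrangianAction_eq_zero [TopologicalSpace E]
    (hL : Continuous fun p : E × E => L p.1 p.2) (hL_nonneg : ∀ x w, 0 ≤ L x w)
    (hlt : t₀ < t₁) (hφ : ContinuousOn φ (Set.Icc t₀ t₁))
    (hφ' : ContinuousOn φ' (Set.Icc t₀ t₁)) (haction : lagrangianAction L φ φ' t₀ t₁ = 0) :
    Set.EqOn (fun t => L (φ t) (φ' t)) 0 (Set.Icc t₀ t₁) :=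
  eqOn_zero_of_intervalIntegral_eq_zero hlt (hL.comp_continuousOn (hφ.prodMk hφ'))
    (fun _ _ => hL_nonneg _ _) haction

variable [NormedAddCommGroup E] [NormedSpace ℝ E] {V : E → ℝ} {V' : E → E →L[ℝ] ℝ}

theorem lagrangianAction_sub_lagrangianAction_neg (hV : ∀ x, HasFDerivAt V (V' x) x)
    (hL : Continuous fun p : E × E => L p.1 p.2) (hdb : ∀ x w, L x w = L x (-w) + V' x w)
    (hle : t₀ ≤ t₁) (hφ : ∀ t ∈ Set.Icc t₀ t₁, HasDerivWithinAt φ (φ' t) (Set.Icc t₀ t₁) t)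
    (hφ' : ContinuousOn φ' (Set.Icc t₀ t₁)) :
    lagrangianAction L φ φ' t₀ t₁ - lagrangianAction L φ (-φ') t₀ t₁ = V (φ t₁) - V (φ t₀) := by
  have hφ_cont : ContinuousOn φ (Set.Icc t₀ t₁) := HasDerivWithinAt.continuousOn hφ
  have hint : IntervalIntegrable (fun t => L (φ t) (φ' t)) MeasureTheory.volume t₀ t₁ :=
    (hL.comp_continuousOn (hφ_cont.prodMk hφ')).intervalIntegrable_of_Icc hle
  have hint_neg : IntervalIntegrable (fun t => L (φ t) ((-φ') t)) MeasureTheory.volume t₀ t₁ :=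
    (hL.comp_continuousOn (hφ_cont.prodMk hφ'.neg)).intervalIntegrable_of_Icc hle
  have hderiv : ∀ t ∈ Set.Icc t₀ t₁,
      HasDerivWithinAt (V ∘ φ) (L (φ t) (φ' t) - L (φ t) ((-φ') t)) (Set.Icc t₀ t₁) t := by
    intro t ht
    rw [Pi.neg_apply, sub_eq_of_eq_add' (hdb (φ t) (φ' t))]
    exact (hV (φ t)).comp_hasDerivWithinAt t (hφ t ht)
  rw [lagrangianAction, lagrangianAction, ← intervalIntegral.integral_sub hint hint_neg]
  exact intervalIntegral.integral_eq_sub_of_hasDerivAt_of_le hle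
    (HasDerivWithinAt.continuousOn hderiv)
    (fun t ht => (hderiv t (Set.Ioo_subset_Icc_self ht)).hasDerivAt (Icc_mem_nhds ht.1 ht.2))
    (hint.sub hint_neg)

theorem reversible_minimizer_is_reversed_relaxation_general (hV : ∀ x, HasFDerivAt V (V' x) x)
    (hL : Continuous fun p : E × E => L p.1 p.2) (hL_nonneg : ∀ x w, 0 ≤ L x w)
    (hdb : ∀ x w, L x w = L x (-w) + V' x w) {b : E → E} (hb : ∀ x w, L x w = 0 → w = b x)
    (hlt : t₀ < t₁) (hφ : ∀ t ∈ Set.Icc t₀ t₁, HasDerivWithinAt φ (φ' t) (Set.Icc t₀ t₁) t)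
    (hφ' : ContinuousOn φ' (Set.Icc t₀ t₁))
    (hmin : V (φ t₁) = V (φ t₀) + lagrangianAction L φ φ' t₀ t₁) :
    ∀ t ∈ Set.Icc t₀ t₁, φ' t = -b (φ t) := by
  have hreversed : lagrangianAction L φ (-φ') t₀ t₁ = 0 := by
    linarith [lagrangianAction_sub_lagrangianAction_neg hV hL hdb hlt.le hφ hφ']
  have hzero : Set.EqOn (fun t => L (φ t) ((-φ') t)) 0 (Set.Icc t₀ t₁) :=
    eqOn_zero_of_lagrangianAction_eq_zero hL hL_nonneg hlt (HasDerivWithinAt.continuousOn hφ)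
      hφ'.neg hreversed
  exact fun t ht => neg_eq_iff_eq_neg.mp (hb _ _ (hzero ht))

end Lagrangian

/-- For a process in detailed balance, with nonnegative Lagrangian `L`
satisfying `L (x, v) = L (x, -v) + ⟪∇V x, v⟫` and relaxation drift `b` the unique zero of
`L (x, ·)`, any C¹ path realizing the quasi-potential difference is the time reversal of
the relaxation dynamics: `φ' t = -b (φ t)` on `[0, T]`. -/
theorem reversible_minimizer_is_reversed_relaxation
    {n : ℕ} (V : EuclideanSpace ℝ (Fin n) → ℝ) (hV : ContDiff ℝ 1 V)
    (L : EuclideanSpace ℝ (Fin n) → EuclideanSpace ℝ (Fin n) → ℝ)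
    (hL : Continuous fun p : EuclideanSpace ℝ (Fin n) × EuclideanSpace ℝ (Fin n) => L p.1 p.2)
    (hL_nonneg : ∀ x w : EuclideanSpace ℝ (Fin n), 0 ≤ L x w)
    (hdb : ∀ x w : EuclideanSpace ℝ (Fin n), L x w = L x (-w) + ⟪gradient V x, w⟫)
    (b : EuclideanSpace ℝ (Fin n) → EuclideanSpace ℝ (Fin n))
    (hb : ∀ x w : EuclideanSpace ℝ (Fin n), L x w = 0 ↔ w = b x)
    (T : ℝ) (hT : 0 < T)
    (φ φ' : ℝ → EuclideanSpace ℝ (Fin n))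
    (hφ : ∀ t ∈ Set.Icc (0 : ℝ) T, HasDerivAt φ (φ' t) t)
    (hφ' : ContinuousOn φ' (Set.Icc (0 : ℝ) T))
    (hmin : V (φ T) = V (φ 0) + ∫ t in (0 : ℝ)..T, L (φ t) (φ' t)) :
    ∀ t ∈ Set.Icc (0 : ℝ) T, φ' t = -b (φ t) := by
  exact reversible_minimizer_is_reversed_relaxation_general
    (fun x => (hV.differentiable one_ne_zero x).hasGradientAt.hasFDerivAt) hL hL_nonneg hdb
    (fun x w => (hb x w).mp) hT (fun t ht => (hφ t ht).hasDerivWithinAt) hφ' hmin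
end

section
/- Let n ≥ 1, let c : ZMod n → ℝ satisfy cᵢ > 0 for all i, let C ∈ ℝ, and define H : (ZMod n → ℝ) → ℝ by H(θ) = Σᵢ cᵢ (exp(θ_{i−1} − θᵢ) + exp(θ_{i+1} − θᵢ) − 2), where indices are cyclic. Define g : ZMod n → ℝ by gᵢ = log(cᵢ) + C. Then H(g − θ) = H(θ) for all θ : ZMod n → ℝ. -/
/-!
Write the Hamiltonian as a sum over ordered pairs `(i, j)` of `r i j * (exp (θ j - θ i) - 1)`.
Replacing `θ` by `g - θ` reverses the exponent at the cost of a factor `exp (g j - g i)`, which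
reversibility absorbs by turning `r i j` into `r j i`; the result is the same sum with the roles of
`i` and `j` exchanged. For the zero-range rates `r i j = c i * p i j` with `p` symmetric, the
factor is `c j / c i`.
-/

section JumpHamiltonian

variable {ι : Type*} [Fintype ι]

/-- The large-deviation Hamiltonian, at a fixed density configuration, of particles jumping from
site `i` to site `j` at rate `r i j`, as a function of the conjugate momentum `θ`. -/
noncomputable def jumpHamiltonian (r : ι → ι → ℝ) (θ : ι → ℝ) : ℝ :=
  ∑ i, ∑ j, r i j * (Real.exp (θ j - θ i) - 1)

theorem jumpHamiltonian_sub_of_reversible {r : ι → ι → ℝ} {g : ι → ℝ}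
    (hr : ∀ i j, r i j * Real.exp (g j - g i) = r j i) (θ : ι → ℝ) :
    jumpHamiltonian r (g - θ) = jumpHamiltonian r θ := by
  have exp_reversal (i j : ι) :
      r i j * Real.exp ((g - θ) j - (g - θ) i) = r j i * Real.exp (θ i - θ j) := by
    rw [← hr i j, mul_assoc, ← Real.exp_add]
    congr 2
    simp only [Pi.sub_apply]
    ring
  calc jumpHamiltonian r (g - θ)
      = ∑ i, ∑ j, r j i * Real.exp (θ i - θ j) - ∑ i, ∑ j, r i j := by
        simp only [jumpHamiltonian, mul_sub_one, exp_reversal, Finset.sum_sub_distrib]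
    _ = ∑ i, ∑ j, r i j * Real.exp (θ j - θ i) - ∑ i, ∑ j, r i j := by
        rw [Finset.sum_comm]
    _ = jumpHamiltonian r θ := by
        simp only [jumpHamiltonian, mul_sub_one, Finset.sum_sub_distrib]

theorem zero_range_hamiltonian_detailed_balance_general {p : ι → ι → ℝ}
    (hp : ∀ i j, p i j = p j i) {c : ι → ℝ} (hc : ∀ i, 0 < c i) {C : ℝ} {g : ι → ℝ}
    (hg : ∀ i, g i = Real.log (c i) + C) (θ : ι → ℝ) :
    jumpHamiltonian (fun i j ↦ c i * p i j) (g - θ) =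
      jumpHamiltonian (fun i j ↦ c i * p i j) θ := by
  refine jumpHamiltonian_sub_of_reversible (fun i j ↦ ?_) θ
  have exp_potential_difference : Real.exp (g j - g i) = c j / c i := by
    rw [hg, hg, add_sub_add_right_eq_sub, Real.exp_sub, Real.exp_log (hc j), Real.exp_log (hc i)]
  rw [exp_potential_difference, hp i j, mul_right_comm, mul_div_cancel₀ _ (hc i).ne']

end JumpHamiltonian

section StepKernel

variable {G : Type*} [AddGroup G] [DecidableEq G]

/-- The jump kernel of the nearest-neighbour walk on `G` with steps `±s`. The two directions are
added, so a site reached by both of them (when `2 • s = 0`) carries weight `2`. -/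
def stepKernel (s i j : G) : ℝ :=
  (if j = i - s then 1 else 0) + (if j = i + s then 1 else 0)

theorem stepKernel_comm (s i j : G) : stepKernel s i j = stepKernel s j i := by
  have step_reversal (a b : G) : a = b - s ↔ b = a + s := eq_sub_iff_add_eq.trans eq_comm
  simp only [stepKernel, step_reversal]
  exact add_comm _ _

theorem jumpHamiltonian_mul_stepKernel [Fintype G] (c : G → ℝ) (s : G) (θ : G → ℝ) :
    jumpHamiltonian (fun i j ↦ c i * stepKernel s i j) θ =
      ∑ i, c i * (Real.exp (θ (i - s) - θ i) + Real.exp (θ (i + s) - θ i) - 2) := by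
  refine Finset.sum_congr rfl fun i _ ↦ ?_
  simp only [stepKernel, mul_assoc, ← Finset.mul_sum, add_mul, ite_mul, one_mul, zero_mul,
    Finset.sum_add_distrib, Finset.sum_ite_eq', Finset.mem_univ, if_true]
  ring

end StepKernel

/-- Detailed balance for the zero-range process Hamiltonian on a periodic
lattice of `n ≥ 1` sites: with rates `cᵢ > 0`, `H θ = Σᵢ cᵢ (e^{θ_{i-1} - θᵢ} +
e^{θ_{i+1} - θᵢ} - 2)` and `gᵢ = log cᵢ + C`, one has `H (g - θ) = H θ`. -/
theorem zero_range_hamiltonian_detailed_balance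
    (n : ℕ) [NeZero n] (c : ZMod n → ℝ) (hc : ∀ i, 0 < c i) (C : ℝ)
    (H : (ZMod n → ℝ) → ℝ)
    (hH : ∀ θ : ZMod n → ℝ,
      H θ = ∑ i : ZMod n,
        c i * (Real.exp (θ (i - 1) - θ i) + Real.exp (θ (i + 1) - θ i) - 2))
    (g : ZMod n → ℝ) (hg : ∀ i, g i = Real.log (c i) + C) :
    ∀ θ : ZMod n → ℝ, H (g - θ) = H θ := by
  obtain rfl : H = jumpHamiltonian fun i j ↦ c i * stepKernel 1 i j :=
    funext fun θ ↦ (hH θ).trans (jumpHamiltonian_mul_stepKernel c 1 θ).symm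
  exact zero_range_hamiltonian_detailed_balance_general (stepKernel_comm 1) hc hg
end
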